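/- Let γ ∈ (0, 1] and let X, Y be independent random variables, each uniformly distributed on [0, 1]. Then the random variable Z = Y·(γX + (1−γ)/2) has probability density (with respect to Lebesgue measure) equal almost everywhere to the function taking the value (1/γ)·ln((1+γ)/(1−γ)) for z ∈ [0, (1−γ)/2], the value (1/γ)·ln((1+γ)/(2z)) for z ∈ ((1−γ)/2, (1+γ)/2], and 0 otherwise. -/

import Mathlib

/-! Conditionally on `W = w > 0`, the product `U W` with `U` uniform on `[0, 1]` is uniform on
`[0, w]`. Averaging the density `w⁻¹ 1_{[0, w]}(z)` over the law of `W` gives the density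
`∫_{w ≥ z} w⁻¹ dP_W(w)` at `z ≥ 0`. For `W = γ X + (1 - γ) / 2`, which is uniform on
`[(1 - γ) / 2, (1 + γ) / 2]`, this integral of `w⁻¹` is the logarithm in the theorem. -/

open MeasureTheory

noncomputable section

/-- The piecewise density: `(1/γ)·ln((1+γ)/(1−γ))` on `[0,(1−γ)/2]`,
`(1/γ)·ln((1+γ)/(2z))` on `((1−γ)/2,(1+γ)/2]`, and `0` otherwise. -/
def fidDensity (γ : ℝ) : ℝ → ℝ := fun z =>
  if 0 ≤ z ∧ z ≤ (1 - γ) / 2 then (1 / γ) * Real.log ((1 + γ) / (1 - γ))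
  else if (1 - γ) / 2 < z ∧ z ≤ (1 + γ) / 2 then (1 / γ) * Real.log ((1 + γ) / (2 * z))
  else 0

open Set ProbabilityTheory
open scoped ENNReal Real

lemma map_mul_add_volume {c : ℝ} (hc : c ≠ 0) (d : ℝ) :
    Measure.map (fun x => c * x + d) volume = ENNReal.ofReal |c⁻¹| • volume := by
  calc Measure.map (fun x => c * x + d) volume
      = Measure.map (· + d) (Measure.map (c * ·) volume) :=
        (Measure.map_map (measurable_add_const d) (measurable_const_mul c)).symm
    _ = ENNReal.ofReal |c⁻¹| • volume := by
        rw [Real.map_volume_mul_left hc, Measure.map_smul, map_add_right_eq_self]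

lemma map_mul_add_restrict_Icc {c : ℝ} (hc : 0 < c) (d a b : ℝ) :
    Measure.map (fun x => c * x + d) (volume.restrict (Icc a b))
      = ENNReal.ofReal c⁻¹ • volume.restrict (Icc (c * a + d) (c * b + d)) := by
  have affine_embedding : MeasurableEmbedding fun x : ℝ => c * x + d :=
    (affineHomeomorph c d hc.ne').measurableEmbedding
  have preimage_Icc : (fun x => c * x + d) ⁻¹' Icc (c * a + d) (c * b + d) = Icc a b := by
    ext x
    simp only [mem_preimage, mem_Icc, add_le_add_iff_right, mul_le_mul_iff_right₀ hc]
  rw [← preimage_Icc, ← affine_embedding.restrict_map, map_mul_add_volume hc.ne',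
    abs_of_pos (inv_pos.2 hc), Measure.restrict_smul]

lemma map_mul_add_of_map_eq_restrict_Icc {Ω : Type*} [MeasurableSpace Ω] {P : Measure Ω}
    {X : Ω → ℝ} {a b : ℝ} (hX : AEMeasurable X P)
    (hXunif : Measure.map X P = volume.restrict (Icc a b)) {c : ℝ} (hc : 0 < c) (d : ℝ) :
    Measure.map (fun ω => c * X ω + d) P
      = ENNReal.ofReal c⁻¹ • volume.restrict (Icc (c * a + d) (c * b + d)) := by
  rw [← map_mul_add_restrict_Icc hc d a b, ← hXunif]
  exact (AEMeasurable.map_map_of_aemeasurable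
    (g := fun x => c * x + d) (by fun_prop) hX).symm

lemma map_mul_restrict_Icc_zero_one {w : ℝ} (hw : 0 < w) :
    Measure.map (w * ·) (volume.restrict (Icc 0 1))
      = volume.withDensity ((Icc 0 w).indicator fun _ => ENNReal.ofReal w⁻¹) := by
  rw [withDensity_indicator measurableSet_Icc, withDensity_const]
  simpa only [add_zero, mul_zero, mul_one] using map_mul_add_restrict_Icc hw 0 0 1

lemma mconv_apply_eq_lintegral_map_mul {M : Type*} [Monoid M] [MeasurableSpace M]
    [MeasurableMul₂ M] (μ ν : Measure M) [SFinite ν] {A : Set M} (hA : MeasurableSet A) :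
    (μ ∗ₘ ν) A = ∫⁻ x, Measure.map (x * ·) ν A ∂μ := by
  have measurable_indicator : Measurable (A.indicator (1 : M → ℝ≥0∞)) :=
    measurable_one.indicator hA
  rw [← lintegral_indicator_one hA, Measure.lintegral_mconv measurable_indicator]
  refine lintegral_congr fun x => ?_
  rw [← lintegral_indicator_one hA, lintegral_map measurable_indicator (measurable_const_mul x)]

theorem restrict_Icc_zero_one_mconv {μ : Measure ℝ} [SFinite μ] (hμ : ∀ᵐ w ∂μ, 0 < w) :
    volume.restrict (Icc 0 1) ∗ₘ μ
      = volume.withDensity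
          ((Ici 0).indicator fun z => ∫⁻ w in Ici z, ENNReal.ofReal w⁻¹ ∂μ) := by
  let k : ℝ → ℝ → ℝ≥0∞ := fun w => (Icc 0 w).indicator fun _ => ENNReal.ofReal w⁻¹
  have measurable_k : Measurable (Function.uncurry k) := by
    have hs : MeasurableSet {p : ℝ × ℝ | p.2 ∈ Icc 0 p.1} :=
      (measurableSet_le measurable_const measurable_snd).inter
        (measurableSet_le measurable_snd measurable_fst)
    have hf : Measurable fun p : ℝ × ℝ => ENNReal.ofReal p.1⁻¹ := by fun_prop
    exact hf.indicator hs
  have lintegral_k (z : ℝ) :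
      ∫⁻ w, k w z ∂μ = (Ici 0).indicator (fun z => ∫⁻ w in Ici z, ENNReal.ofReal w⁻¹ ∂μ) z := by
    by_cases hz : 0 ≤ z
    · rw [indicator_of_mem (mem_Ici.2 hz), ← lintegral_indicator measurableSet_Ici]
      simp only [k, indicator_apply, mem_Icc, mem_Ici, hz, true_and]
    · simp [k, hz]
  ext A hA
  calc (volume.restrict (Icc 0 1) ∗ₘ μ) A
      = ∫⁻ w, Measure.map (w * ·) (volume.restrict (Icc 0 1)) A ∂μ := by
        rw [Measure.mconv_comm, mconv_apply_eq_lintegral_map_mul _ _ hA]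
    _ = ∫⁻ w, (∫⁻ z in A, k w z) ∂μ := by
        refine lintegral_congr_ae (hμ.mono fun w hw => ?_)
        simp only [map_mul_restrict_Icc_zero_one hw, withDensity_apply _ hA, k]
    _ = ∫⁻ z in A, (∫⁻ w, k w z ∂μ) := lintegral_lintegral_swap measurable_k.aemeasurable
    _ = _ := by simp only [lintegral_k, withDensity_apply _ hA]

lemma setLIntegral_Icc_ofReal_inv {a b : ℝ} (ha : 0 < a) (hb : 0 ≤ b) :
    ∫⁻ w in Icc a b, ENNReal.ofReal w⁻¹ = ENNReal.ofReal (log⁺ (b / a)) := by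
  have hba : 0 ≤ b / a := div_nonneg hb ha.le
  rcases lt_or_ge b a with hlt | hle
  · have : log⁺ (b / a) = 0 := by
      rw [Real.posLog_eq_zero_iff, abs_of_nonneg hba]
      exact (div_le_one ha).2 hlt.le
    simp [Icc_eq_empty hlt.not_ge, this]
  · have hpos {w : ℝ} (hw : w ∈ Icc a b) : 0 < w := ha.trans_le hw.1
    have hcont : ContinuousOn (fun w : ℝ => w⁻¹) (Icc a b) :=
      continuousOn_id.inv₀ fun w hw => (hpos hw).ne'
    have hnonneg : ∀ᵐ w ∂volume.restrict (Icc a b), 0 ≤ w⁻¹ :=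
      ae_restrict_of_forall_mem measurableSet_Icc fun w hw => (inv_pos.2 (hpos hw)).le
    rw [← ofReal_integral_eq_lintegral_ofReal hcont.integrableOn_Icc hnonneg,
      integral_Icc_eq_integral_Ioc, ← intervalIntegral.integral_of_le hle,
      integral_inv_of_pos ha (ha.trans_le hle), Real.posLog_eq_log]
    rwa [abs_of_nonneg hba, one_le_div ha]

theorem restrict_Icc_zero_one_mconv_restrict_Icc {a b : ℝ} (ha : 0 ≤ a) (hb : 0 ≤ b) :
    volume.restrict (Icc 0 1) ∗ₘ volume.restrict (Icc a b)
      = volume.withDensity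
          ((Ici 0).indicator fun z => ENNReal.ofReal (log⁺ (b / max a z))) := by
  have ae_pos : ∀ᵐ w ∂volume.restrict (Icc a b), 0 < w := by
    filter_upwards [ae_restrict_mem measurableSet_Icc,
      ae_restrict_of_ae (Measure.ae_ne volume 0)] with w hw hw0
    exact (ha.trans hw.1).lt_of_ne' hw0
  rw [restrict_Icc_zero_one_mconv ae_pos]
  refine withDensity_congr_ae ?_
  -- At `z = 0`, if `a = 0 < b`, the integral is `∞` and the right side the junk `log⁺ (b / 0)`.
  filter_upwards [Measure.ae_ne volume 0] with z hz
  rcases hz.lt_or_gt with hneg | hpos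
  · simp only [indicator_of_notMem (notMem_Ici.2 hneg)]
  · rw [indicator_of_mem (mem_Ici.2 hpos.le), indicator_of_mem (mem_Ici.2 hpos.le),
      Measure.restrict_restrict measurableSet_Ici, ← Ici_inter_Iic, ← inter_assoc, Ici_inter_Ici,
      max_comm, Ici_inter_Iic, setLIntegral_Icc_ofReal_inv (lt_max_of_lt_right hpos) hb]

lemma fidDensity_of_neg {γ z : ℝ} (hγ : γ ≤ 1) (hz : z < 0) : fidDensity γ z = 0 := by
  rw [fidDensity, if_neg fun h => hz.not_ge h.1, if_neg fun h => by linarith [h.1]]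

lemma fidDensity_of_pos {γ z : ℝ} (hγ : 0 ≤ γ) (hz : 0 < z) :
    fidDensity γ z = γ⁻¹ * log⁺ ((1 + γ) / 2 / max ((1 - γ) / 2) z) := by
  rw [fidDensity, one_div]
  rcases le_or_gt z ((1 - γ) / 2) with hza | haz
  · have one_le : 1 ≤ (1 + γ) / (1 - γ) := (one_le_div (by linarith)).2 (by linarith)
    rw [if_pos ⟨hz.le, hza⟩, max_eq_left hza, div_div_div_cancel_right₀ two_ne_zero,
      Real.posLog_eq_log (one_le.trans (le_abs_self _))]
  · rw [if_neg fun h => haz.not_ge h.2, max_eq_right haz.le]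
    rcases le_or_gt z ((1 + γ) / 2) with hzb | hbz
    · have one_le : 1 ≤ (1 + γ) / 2 / z := (one_le_div hz).2 hzb
      rw [if_pos ⟨haz, hzb⟩, Real.posLog_eq_log (one_le.trans (le_abs_self _)), div_div]
    · have le_one : |(1 + γ) / 2 / z| ≤ 1 := by
        rw [abs_of_nonneg (by positivity)]
        exact (div_le_one hz).2 hbz.le
      rw [if_neg fun h => hbz.not_ge h.2, (Real.posLog_eq_zero_iff _).2 le_one, mul_zero]

lemma ofReal_fidDensity_ae_eq {γ : ℝ} (hγ : γ ∈ Icc (0 : ℝ) 1) :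
    (fun z => ENNReal.ofReal (fidDensity γ z)) =ᵐ[volume]
      ENNReal.ofReal γ⁻¹ • (Ici 0).indicator fun z =>
        ENNReal.ofReal (log⁺ ((1 + γ) / 2 / max ((1 - γ) / 2) z)) := by
  filter_upwards [Measure.ae_ne volume 0] with z hz
  rw [Pi.smul_apply, smul_eq_mul]
  rcases hz.lt_or_gt with hneg | hpos
  · rw [fidDensity_of_neg hγ.2 hneg, indicator_of_notMem (notMem_Ici.2 hneg), mul_zero,
      ENNReal.ofReal_zero]
  · rw [fidDensity_of_pos hγ.1 hpos, indicator_of_mem (mem_Ici.2 hpos.le),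
      ENNReal.ofReal_mul (inv_nonneg.2 hγ.1)]

/-- For `γ ∈ (0,1]` and independent random variables `X, Y`, each uniform
on `[0,1]`, the random variable `Z = Y·(γX + (1−γ)/2)` has probability density `fidDensity γ`
with respect to Lebesgue measure. -/
theorem density_of_product_of_uniforms (γ : ℝ) (hγ : γ ∈ Set.Ioc (0 : ℝ) 1)
    {Ω : Type*} [MeasurableSpace Ω] (P : Measure Ω) [IsProbabilityMeasure P]
    (X Y : Ω → ℝ) (hX : Measurable X) (hY : Measurable Y)
    (hindep : ProbabilityTheory.IndepFun X Y P)
    (hXunif : Measure.map X P = volume.restrict (Set.Icc (0 : ℝ) 1))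
    (hYunif : Measure.map Y P = volume.restrict (Set.Icc (0 : ℝ) 1)) :
    Measure.map (fun ω => Y ω * (γ * X ω + (1 - γ) / 2)) P
      = volume.withDensity (fun z : ℝ => ENNReal.ofReal (fidDensity γ z)) := by
  let W : Ω → ℝ := fun ω => γ * X ω + (1 - γ) / 2
  have measurable_W : Measurable W := (hX.const_mul γ).add_const _
  have indepFun_Y_W : IndepFun Y W P :=
    hindep.symm.comp measurable_id (ψ := fun x => γ * x + (1 - γ) / 2) (by fun_prop)
  have map_W : Measure.map W P
      = ENNReal.ofReal γ⁻¹ • volume.restrict (Icc ((1 - γ) / 2) ((1 + γ) / 2)) := by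
    convert map_mul_add_of_map_eq_restrict_Icc hX.aemeasurable hXunif hγ.1 ((1 - γ) / 2)
      using 4 <;> ring
  calc Measure.map (Y * W) P
      = volume.restrict (Icc 0 1) ∗ₘ Measure.map W P := by
        rw [indepFun_Y_W.map_mul_eq_map_mconv_map hY measurable_W, hYunif]
    _ = ENNReal.ofReal γ⁻¹ •
          (volume.restrict (Icc 0 1) ∗ₘ volume.restrict (Icc ((1 - γ) / 2) ((1 + γ) / 2))) := by
        rw [map_W, Measure.mconv_smul_right]
    _ = _ := by
        rw [restrict_Icc_zero_one_mconv_restrict_Icc (by linarith [hγ.2]) (by linarith [hγ.1]),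
          ← withDensity_smul' _ _ ENNReal.ofReal_ne_top,
          withDensity_congr_ae (ofReal_fidDensity_ae_eq ⟨hγ.1.le, hγ.2⟩)]
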